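/- Suppose F satisfies (G1). Then for every signed measure μ ∈ S^∞ with marginal density φ₁ = d(π₁_*μ)/dm, it holds ‖F^*μ‖_∞ ≤ α‖μ‖_∞ + ‖φ₁‖_∞. -/

import Mathlib

open MeasureTheory ENNReal Set

namespace RDS

/-- The one-sided subshift of finite type `Σ_A^+` determined by the 0-1 matrix `A`. -/
abbrev SigmaA (N : ℕ) (A : Fin N → Fin N → Bool) :=
  {x : ℕ → Fin N // ∀ i, A (x i) (x (i + 1)) = true}

variable {N : ℕ} {A : Fin N → Fin N → Bool}

/-- The shift map `σ` on `Σ_A^+`. -/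
def shift (x : SigmaA N A) : SigmaA N A :=
  ⟨fun i => x.val (i + 1), fun i => x.prop (i + 1)⟩

/-- Aperiodicity of a 0-1 matrix: some power has all entries positive. -/
def Aperiodic (A : Fin N → Fin N → Bool) : Prop :=
  ∃ k : ℕ, 0 < k ∧ ∀ i j,
    0 < ((Matrix.of fun a b => if A a b then (1 : ℕ) else 0) ^ k) i j

/-- The metric `d_θ(x,y) = Σ_i θ^i (1 - δ(x_i, y_i))` on `Σ_A^+`. -/
noncomputable def dTheta (θ : ℝ) (x y : SigmaA N A) : ℝ :=
  ∑' i : ℕ, θ ^ i * (if x.val i = y.val i then (0 : ℝ) else 1)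

/-- Cylinder sets of `Σ_A^+`. -/
def cylinder (n : ℕ) (w : Fin (n + 1) → Fin N) : Set (SigmaA N A) :=
  {x | ∀ i : Fin (n + 1), x.val i = w i}

/-- `m` is a Markov measure on `Σ_A^+` compatible with `A`: it is given on
cylinders by a stochastic matrix `P` (vanishing where `A` vanishes) and a
stationary probability vector `p`. -/
def IsMarkov (m : Measure (SigmaA N A)) : Prop :=
  ∃ (p : Fin N → ℝ≥0∞) (P : Fin N → Fin N → ℝ≥0∞),
    (∑ i, p i = 1) ∧ (∀ i, ∑ j, P i j = 1) ∧ (∀ j, ∑ i, p i * P i j = p j) ∧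
    (∀ i j, A i j = false → P i j = 0) ∧
    ∀ (n : ℕ) (w : Fin (n + 1) → Fin N),
      m (cylinder n w) = p (w 0) * ∏ i : Fin n, P (w i.castSucc) (w i.succ)

/-- `σ_i⁻¹(γ)`: the sequence `γ` with the symbol `i` prepended
(defined when `A i γ₀ = 1`), i.e. the inverse branch of the restriction `σ_i`
of `σ` to the cylinder `[i]`. -/
def prepend (i : Fin N) (x : SigmaA N A) (h : A i (x.val 0) = true) : SigmaA N A :=
  ⟨fun n => match n with
    | 0 => i
    | Nat.succ k => x.val k,
   fun j => match j with
    | 0 => h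
    | Nat.succ k => x.prop k⟩

/-- `f` is `L`-Lipschitz with respect to the distance function `d`. -/
def LipWithD {X : Type*} (d : X → X → ℝ) (L : ℝ) (f : X → ℝ) : Prop :=
  ∀ x y, |f x - f y| ≤ L * d x y

/-- `f` is Lipschitz with respect to the distance function `d`. -/
def LipD {X : Type*} (d : X → X → ℝ) (f : X → ℝ) : Prop :=
  ∃ L : ℝ, LipWithD d L f

/-- The best Lipschitz constant of `f` with respect to `d` (valued in `ℝ≥0∞`). -/
noncomputable def lipConst {X : Type*} (d : X → X → ℝ) (f : X → ℝ) : ℝ≥0∞ :=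
  ⨆ (x : X) (y : X), ENNReal.ofReal (|f x - f y| / d x y)

/-- The sup norm of `f` (valued in `ℝ≥0∞`). -/
noncomputable def supNormE {X : Type*} (f : X → ℝ) : ℝ≥0∞ :=
  ⨆ x : X, ENNReal.ofReal |f x|

/-- The norm `‖f‖_θ = ‖f‖_∞ + Lip_d(f)`. -/
noncomputable def thetaNorm {X : Type*} (d : X → X → ℝ) (f : X → ℝ) : ℝ≥0∞ :=
  supNormE f + lipConst d f

/-- The Perron-Frobenius operator duality characterizing `P_σ`:
`∫ P_σ(φ) · ψ dm = ∫ φ · (ψ ∘ σ) dm` for integrable `φ` and bounded measurable `ψ`. -/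
def IsPerronFrobenius (m : Measure (SigmaA N A))
    (Pσ : (SigmaA N A → ℝ) → SigmaA N A → ℝ) : Prop :=
  ∀ φ ψ : SigmaA N A → ℝ, Integrable φ m → Measurable ψ → (∃ C, ∀ x, |ψ x| ≤ C) →
    ∫ x, Pσ φ x * ψ x ∂m = ∫ x, φ x * ψ (shift x) ∂m

/-- Spectral gap for `P_σ` on `d_θ`-Lipschitz functions with constants `D`, `r`:
`‖P_σ^n φ‖_θ ≤ D r^n ‖φ‖_θ` for all `n` and all `d_θ`-Lipschitz `φ` with
`∫ φ dm = 0`. -/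
def HasGap (m : Measure (SigmaA N A)) (θ : ℝ)
    (Pσ : (SigmaA N A → ℝ) → SigmaA N A → ℝ) (D r : ℝ) : Prop :=
  ∀ φ : SigmaA N A → ℝ, LipD (dTheta θ) φ → (∫ x, φ x ∂m) = 0 →
    ∀ n : ℕ, thetaNorm (dTheta θ) (Pσ^[n] φ) ≤
      ENNReal.ofReal (D * r ^ n) * thetaNorm (dTheta θ) φ

/-- `Jm i` is the Jacobian `J_{m,σ_i}` of `m` with respect to the branch `σ_i`
(the restriction of `σ` to the cylinder `[i]`): `m (σ_i(E)) = ∫_E J_{m,σ_i} dm`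
for every measurable `E` (intersected with `[i]`). -/
def IsJacobian (m : Measure (SigmaA N A)) (Jm : Fin N → SigmaA N A → ℝ) : Prop :=
  ∀ (i : Fin N) (E : Set (SigmaA N A)), MeasurableSet E →
    m {γ : SigmaA N A | ∃ h : A i (γ.val 0) = true, prepend i γ h ∈ E} =
      ∫⁻ x in E ∩ {x : SigmaA N A | x.val 0 = i}, ENNReal.ofReal (Jm i x) ∂m

variable {K : Type*} [MetricSpace K] [MeasurableSpace K]

/-- The Wasserstein-Kantorovich like distance `W(ν₁,ν₂)`: the supremum of
`|∫ g dν₁ - ∫ g dν₂|` over `g : K → ℝ` with `Lip(g) ≤ 1` and `‖g‖_∞ ≤ 1`.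
Applied with `ν₂ = 0` it gives the norm `‖ν₁‖_W`; applied to the two parts of a
decomposition of a signed measure it gives its `‖·‖_W` norm. -/
noncomputable def wDist (ν₁ ν₂ : Measure K) : ℝ≥0∞ :=
  ⨆ g : {g : K → ℝ // LipschitzWith 1 g ∧ ∀ z, |g z| ≤ 1},
    ENNReal.ofReal |∫ z, g.val z ∂ν₁ - ∫ z, g.val z ∂ν₂|

/-- The skew product `F(x,z) = (σ(x), G(x,z))`. -/
def skew (G : SigmaA N A × K → K) (p : SigmaA N A × K) : SigmaA N A × K :=
  (shift p.1, G p)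

/-- The transfer operator `F^* μ (E) = μ (F⁻¹ E)` acting on signed measures. -/
noncomputable def transfer (G : SigmaA N A × K → K)
    (μ : SignedMeasure (SigmaA N A × K)) : SignedMeasure (SigmaA N A × K) :=
  μ.map (skew G)

/-- Condition (G1): uniform contraction of the vertical fibers with rate `α`. -/
def CondG1 (G : SigmaA N A × K → K) (α : ℝ) : Prop :=
  ∀ (x : SigmaA N A) (z₁ z₂ : K), dist (G (x, z₁)) (G (x, z₂)) ≤ α * dist z₁ z₂

/-- Condition (G2): `x ↦ G(x,z)` is `d_θ`-Lipschitz with constant `H`,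
uniformly in `z`. -/
def CondG2 (θ : ℝ) (G : SigmaA N A × K → K) (H : ℝ) : Prop :=
  ∀ (z : K) (x y : SigmaA N A), dist (G (x, z)) (G (y, z)) ≤ H * dTheta θ x y

/-- `T` is (the path `γ ↦ μ|_γ` of) a disintegration of `μ` along the vertical
fibers, over the reference measure `m`: `μ(E) = ∫ (μ|_γ)(E ∩ γ) dm(γ)`. -/
def IsDisint (m : Measure (SigmaA N A)) (μ : Measure (SigmaA N A × K))
    (T : SigmaA N A → Measure K) : Prop :=
  (∀ E : Set (SigmaA N A × K), MeasurableSet E →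
      μ E = ∫⁻ γ, T γ {z | (γ, z) ∈ E} ∂m) ∧
  ∀ E : Set K, MeasurableSet E → Measurable fun γ => T γ E

/-- The (essential) `‖·‖_W`-Lipschitz constant of a path of measures,
`|Γ|_θ^ω = ess sup_{γ₁ ≠ γ₂} ‖Γ(γ₁) - Γ(γ₂)‖_W / d_θ(γ₁,γ₂)`. -/
noncomputable def pathLip (m : Measure (SigmaA N A)) (θ : ℝ)
    (T : SigmaA N A → Measure K) : ℝ≥0∞ :=
  essSup (fun p : SigmaA N A × SigmaA N A =>
    wDist (T p.1) (T p.2) / ENNReal.ofReal (dTheta θ p.1 p.2)) (m.prod m)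

/-- The Lipschitz constant `|μ|_θ` of a positive measure: the infimum over
disintegrations `ω` of `μ` of `|μ|_θ^ω`. -/
noncomputable def lipDisint (m : Measure (SigmaA N A)) (θ : ℝ)
    (μ : Measure (SigmaA N A × K)) : ℝ≥0∞ :=
  ⨅ T : {T : SigmaA N A → Measure K // IsDisint m μ T}, pathLip m θ T.val

/-- The fiberwise transfer formula: the path representing `F^*μ` induced by the
path `T` representing `μ`, i.e.
`γ ↦ Σ_i 1_{σ([i])}(γ) (F_{iγ})_*(T(iγ)) / J_{m,σ_i}(iγ)`. -/
noncomputable def transferPath (G : SigmaA N A × K → K) (Jm : Fin N → SigmaA N A → ℝ)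
    (T : SigmaA N A → Measure K) : SigmaA N A → Measure K :=
  fun γ => ∑ i : Fin N, if h : A i (γ.val 0) = true then
      ENNReal.ofReal ((Jm i (prepend i γ h))⁻¹) •
        ((T (prepend i γ h)).map fun z => G (prepend i γ h, z))
    else 0

variable [BorelSpace K] [CompactSpace K] [Nonempty K]

/-- The fiberwise restriction `μ|_γ = π₂_* (φ₁(γ) μ_γ)` of a finite positive
measure `μ` on `Σ_A^+ × K`, where `({μ_γ}_γ, φ₁ m)` is the Rokhlin
disintegration of `μ` along the vertical fibers and `φ₁ = d(π₁_*μ)/dm`. -/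
noncomputable def fiberR (m : Measure (SigmaA N A))
    (μ : Measure (SigmaA N A × K)) (γ : SigmaA N A) : Measure K := by
  by_cases h : IsFiniteMeasure μ
  · haveI := h
    exact (μ.fst.rnDeriv m γ) • μ.condKernel γ
  · exact 0

/-- The norm `‖μ‖_∞ = ess sup_γ ‖μ|_γ‖_W` of a signed measure written as a
difference `μ = μ₁ - μ₂` of positive measures. -/
noncomputable def infNormPair (m : Measure (SigmaA N A))
    (μ₁ μ₂ : Measure (SigmaA N A × K)) : ℝ≥0∞ :=
  essSup (fun γ => wDist (fiberR m μ₁ γ) (fiberR m μ₂ γ)) m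

/-- The marginal density `φ₁ = d(π₁_*μ)/dm` of the signed measure `μ = μ₁ - μ₂`. -/
noncomputable def phiPair (m : Measure (SigmaA N A))
    (μ₁ μ₂ : Measure (SigmaA N A × K)) (γ : SigmaA N A) : ℝ :=
  (μ₁.fst.rnDeriv m γ).toReal - (μ₂.fst.rnDeriv m γ).toReal

/-- Membership in `AB`: both parts are finite with first marginal absolutely
continuous with respect to `m`. -/
def MemABPair (m : Measure (SigmaA N A)) (μ₁ μ₂ : Measure (SigmaA N A × K)) : Prop :=
  μ₁.fst ≪ m ∧ μ₂.fst ≪ m ∧ IsFiniteMeasure μ₁ ∧ IsFiniteMeasure μ₂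

/-- Membership in `S^∞`: `μ ∈ AB`, `‖μ‖_∞ < ∞` and the marginal density `φ₁`
has a `d_θ`-Lipschitz version. -/
def MemSPair (m : Measure (SigmaA N A)) (θ : ℝ)
    (μ₁ μ₂ : Measure (SigmaA N A × K)) : Prop :=
  MemABPair m μ₁ μ₂ ∧ infNormPair m μ₁ μ₂ < ⊤ ∧
    ∃ ψ : SigmaA N A → ℝ, ψ =ᵐ[m] phiPair m μ₁ μ₂ ∧ LipD (dTheta θ) ψ

/-- `‖φ₁‖_θ`, computed on the best version of the marginal density. -/
noncomputable def thetaNormMu (m : Measure (SigmaA N A)) (θ : ℝ)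
    (μ₁ μ₂ : Measure (SigmaA N A × K)) : ℝ≥0∞ :=
  ⨅ ψ : {ψ : SigmaA N A → ℝ // ψ =ᵐ[m] phiPair m μ₁ μ₂}, thetaNorm (dTheta θ) ψ.val

/-- The norm `‖μ‖_{S^∞} = ‖φ₁‖_θ + ‖μ‖_∞`. -/
noncomputable def sNormPair (m : Measure (SigmaA N A)) (θ : ℝ)
    (μ₁ μ₂ : Measure (SigmaA N A × K)) : ℝ≥0∞ :=
  thetaNormMu m θ μ₁ μ₂ + infNormPair m μ₁ μ₂

/-- Positive part of a signed measure. -/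
noncomputable def jPos {X : Type*} [MeasurableSpace X] (μ : SignedMeasure X) : Measure X :=
  μ.toJordanDecomposition.posPart

/-- Negative part of a signed measure. -/
noncomputable def jNeg {X : Type*} [MeasurableSpace X] (μ : SignedMeasure X) : Measure X :=
  μ.toJordanDecomposition.negPart

/-- Membership in `AB` for signed measures. -/
def MemAB (m : Measure (SigmaA N A)) (μ : SignedMeasure (SigmaA N A × K)) : Prop :=
  MemABPair m (jPos μ) (jNeg μ)

/-- Membership in `S^∞` for signed measures. -/
def MemS (m : Measure (SigmaA N A)) (θ : ℝ) (μ : SignedMeasure (SigmaA N A × K)) : Prop :=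
  MemSPair m θ (jPos μ) (jNeg μ)

/-- `‖μ‖_∞` for signed measures. -/
noncomputable def infNorm (m : Measure (SigmaA N A))
    (μ : SignedMeasure (SigmaA N A × K)) : ℝ≥0∞ :=
  infNormPair m (jPos μ) (jNeg μ)

/-- `‖μ‖_{S^∞}` for signed measures. -/
noncomputable def sNorm (m : Measure (SigmaA N A)) (θ : ℝ)
    (μ : SignedMeasure (SigmaA N A × K)) : ℝ≥0∞ :=
  sNormPair m θ (jPos μ) (jNeg μ)

/-- `‖φ₁‖_∞` of the marginal density of a signed measure. -/
noncomputable def phiSup (m : Measure (SigmaA N A))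
    (μ : SignedMeasure (SigmaA N A × K)) : ℝ≥0∞ :=
  essSup (fun γ => ENNReal.ofReal |phiPair m (jPos μ) (jNeg μ) γ|) m

open Filter Topology NNReal

/-! Tested against a function `g` on the fiber, `γ ↦ ∫ g d(F^*μ)|_γ` is the image of
`x ↦ ∫ g(G(x, z)) dμ|_x(z)` under the Perron-Frobenius operator of the base map, which contracts the
essential supremum. If `g` is a test function for `‖·‖_W`, then by (G1) and `diam K = 1` the
function `z ↦ g(G(x, z))` equals `α k + c` with `k` a test function and `|c| ≤ 1`, so its integral
against `μ|_x` is at most `α ‖μ|_x‖_W + |φ₁(x)|` in absolute value. -/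

section JordanParts

variable {X : Type*} [MeasurableSpace X] {μ : SignedMeasure X}

instance : IsFiniteMeasure (jPos μ) :=
  μ.toJordanDecomposition.posPart_finite

instance : IsFiniteMeasure (jNeg μ) :=
  μ.toJordanDecomposition.negPart_finite

lemma jPos_add_jNeg (μ : SignedMeasure X) : jPos μ + jNeg μ = μ.variation :=
  μ.totalVariation_eq_variation

lemma jPos_le_variation (μ : SignedMeasure X) : jPos μ ≤ μ.variation :=
  jPos_add_jNeg μ ▸ Measure.le_add_right le_rfl

lemma jNeg_le_variation (μ : SignedMeasure X) : jNeg μ ≤ μ.variation :=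
  jPos_add_jNeg μ ▸ Measure.le_add_left le_rfl

instance : IsFiniteMeasure μ.variation :=
  jPos_add_jNeg μ ▸ inferInstance

lemma integral_jPos_sub_integral_jNeg {f : X → ℝ} (hf : μ.Integrable f) :
    ∫ x, f x ∂jPos μ - ∫ x, f x ∂jNeg μ = ∫ᵛ x, f x ∂<•μ := by
  have hpos : (jPos μ).toSignedMeasure.Integrable f := by
    simpa only [VectorMeasure.Integrable, Measure.variation_toSignedMeasure]
      using hf.mono_measure (jPos_le_variation μ)
  have hneg : (jNeg μ).toSignedMeasure.Integrable f := by
    simpa only [VectorMeasure.Integrable, Measure.variation_toSignedMeasure]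
      using hf.mono_measure (jNeg_le_variation μ)
  have hμ : μ = (jPos μ).toSignedMeasure - (jNeg μ).toSignedMeasure :=
    μ.toSignedMeasure_toJordanDecomposition.symm
  conv_rhs => rw [hμ]
  rw [VectorMeasure.integral_sub_vectorMeasure hpos hneg,
    VectorMeasure.integral_toSignedMeasure, VectorMeasure.integral_toSignedMeasure]

lemma fst_jPos_absolutelyContinuous {Z : Type*} [MeasurableSpace Z] {m : Measure X}
    {μ : SignedMeasure (X × Z)} (hμ : μ.variation.fst ≪ m) : (jPos μ).fst ≪ m :=
  (Measure.fst_mono (jPos_le_variation μ)).absolutelyContinuous.trans hμ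

lemma fst_jNeg_absolutelyContinuous {Z : Type*} [MeasurableSpace Z] {m : Measure X}
    {μ : SignedMeasure (X × Z)} (hμ : μ.variation.fst ≪ m) : (jNeg μ).fst ≪ m :=
  (Measure.fst_mono (jNeg_le_variation μ)).absolutelyContinuous.trans hμ

end JordanParts

section EssSup

variable {X Y : Type*} [MeasurableSpace X] [MeasurableSpace Y]

lemma ae_le_const_of_forall_setIntegral_le {m : Measure X} [SigmaFinite m] {f : X → ℝ}
    (hf : Integrable f m) {c : ℝ}
    (h : ∀ s, MeasurableSet s → m s < ∞ → ∫ x in s, f x ∂m ≤ c * m.real s) :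
    ∀ᵐ x ∂m, f x ≤ c := by
  have hconst : ∀ s, m s < ∞ → IntegrableOn (fun _ => c) s m := fun s hs =>
    integrableOn_const hs.ne
  have hnonneg : 0 ≤ᵐ[m] fun x => c - f x := by
    refine ae_nonneg_of_forall_setIntegral_nonneg_of_sigmaFinite
      (fun s _ hms => (hconst s hms).sub hf.integrableOn) fun s hs hms => ?_
    rw [integral_sub (hconst s hms) hf.integrableOn, setIntegral_const, smul_eq_mul, mul_comm]
    exact sub_nonneg.2 (h s hs hms)
  exact hnonneg.mono fun x hx => sub_nonneg.1 hx

-- The hypothesis `h` says that `ψ` is the image of `φ` under the Perron-Frobenius operator of `T`.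
lemma eLpNormEssSup_le_of_setIntegral_eq {m : Measure X} {m' : Measure Y} [SigmaFinite m']
    {T : X → Y} (hT : MeasurePreserving T m m') {φ : X → ℝ} {ψ : Y → ℝ} (hψ : Integrable ψ m')
    (h : ∀ s, MeasurableSet s → ∫ y in s, ψ y ∂m' = ∫ x in T ⁻¹' s, φ x ∂m) :
    eLpNormEssSup ψ m' ≤ eLpNormEssSup φ m := by
  rcases eq_or_ne (eLpNormEssSup φ m) ∞ with htop | hfin
  · exact htop ▸ le_top
  set c := (eLpNormEssSup φ m).toReal
  have hφ : ∀ᵐ x ∂m, ‖φ x‖ ≤ c := (ae_le_eLpNormEssSup (f := φ)).mono fun x hx => by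
    simpa only [toReal_enorm] using ENNReal.toReal_mono hfin hx
  have hset : ∀ s, MeasurableSet s → m' s < ∞ → |∫ y in s, ψ y ∂m'| ≤ c * m'.real s := by
    intro s hs hms
    have hpre : m (T ⁻¹' s) = m' s := hT.measure_preimage hs.nullMeasurableSet
    rw [h s hs, measureReal_def, ← hpre]
    exact norm_setIntegral_le_of_norm_le_const_ae' (hpre ▸ hms) (hφ.mono fun x hx _ => hx)
  have hupper : ∀ᵐ y ∂m', ψ y ≤ c :=
    ae_le_const_of_forall_setIntegral_le hψ fun s hs hms => (le_abs_self _).trans (hset s hs hms)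
  have hlower : ∀ᵐ y ∂m', -ψ y ≤ c :=
    ae_le_const_of_forall_setIntegral_le hψ.neg fun s hs hms => by
      simp only [Pi.neg_apply, integral_neg]
      exact (neg_le_abs _).trans (hset s hs hms)
  rw [← ENNReal.ofReal_toReal hfin]
  refine eLpNormEssSup_le_of_ae_bound ?_
  filter_upwards [hupper, hlower] with y hy hy'
  exact abs_le'.2 ⟨hy, hy'⟩

end EssSup

section Fibers

variable {X Z : Type*} [MeasurableSpace X] [MeasurableSpace Z] [StandardBorelSpace Z] [Nonempty Z]

/-- The restriction `ν|_x` of a finite measure `ν` on `X × Z` to the fiber over `x`, relative to a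
reference measure `m` on the base: the conditional probability on the fiber weighted by the
density of the first marginal. It extends `fiberR` to an arbitrary base. -/
noncomputable def fiberMeasure (m : Measure X) (ν : Measure (X × Z)) [IsFiniteMeasure ν] (x : X) :
    Measure Z :=
  ν.fst.rnDeriv m x • ν.condKernel x

/-- The integral `∫ f(x, z) dμ|_x(z)` of a function on `X × Z` over the fiber of a signed
measure `μ`, where `μ|_x` is the difference of the restrictions of the Jordan parts. -/
noncomputable def fiberIntegral (m : Measure X) (μ : SignedMeasure (X × Z)) (f : X × Z → ℝ)
    (x : X) : ℝ :=
  ∫ z, f (x, z) ∂fiberMeasure m (jPos μ) x - ∫ z, f (x, z) ∂fiberMeasure m (jNeg μ) x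

variable {m : Measure X}

lemma fiberMeasure_real_univ (ν : Measure (X × Z)) [IsFiniteMeasure ν] (x : X) :
    (fiberMeasure m ν x).real univ = (ν.fst.rnDeriv m x).toReal := by
  simp [fiberMeasure, Measure.real]

lemma integral_fiberMeasure (ν : Measure (X × Z)) [IsFiniteMeasure ν] (f : Z → ℝ) (x : X) :
    ∫ z, f z ∂fiberMeasure m ν x = (ν.fst.rnDeriv m x).toReal • ∫ z, f z ∂ν.condKernel x :=
  integral_smul_measure f _

lemma ae_isFiniteMeasure_fiberMeasure (ν : Measure (X × Z)) [IsFiniteMeasure ν] :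
    ∀ᵐ x ∂m, IsFiniteMeasure (fiberMeasure m ν x) := by
  filter_upwards [ν.fst.rnDeriv_lt_top m] with x hx
  exact Measure.smul_finite _ hx.ne

variable [SigmaFinite m]

lemma integrable_integral_fiberMeasure {ν : Measure (X × Z)} [IsFiniteMeasure ν]
    (hν : ν.fst ≪ m) {f : X × Z → ℝ} (hf : Integrable f ν) :
    Integrable (fun x => ∫ z, f (x, z) ∂fiberMeasure m ν x) m := by
  simp only [integral_fiberMeasure]
  exact (integrable_rnDeriv_smul_iff hν).2 hf.integral_condKernel

lemma setIntegral_integral_fiberMeasure {ν : Measure (X × Z)} [IsFiniteMeasure ν]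
    (hν : ν.fst ≪ m) {f : X × Z → ℝ} (hf : Integrable f ν) {s : Set X} (hs : MeasurableSet s) :
    ∫ x in s, ∫ z, f (x, z) ∂fiberMeasure m ν x ∂m = ∫ p in Prod.fst ⁻¹' s, f p ∂ν := by
  simp only [integral_fiberMeasure]
  rw [setIntegral_rnDeriv_smul hν hs, ← prod_univ,
    Measure.setIntegral_condKernel_univ_right hs hf.integrableOn]

variable {μ : SignedMeasure (X × Z)}

lemma integrable_fiberIntegral (hμ : μ.variation.fst ≪ m) {f : X × Z → ℝ}
    (hf : μ.Integrable f) : Integrable (fiberIntegral m μ f) m :=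
  (integrable_integral_fiberMeasure (fst_jPos_absolutelyContinuous hμ)
      (hf.mono_measure (jPos_le_variation μ))).sub
    (integrable_integral_fiberMeasure (fst_jNeg_absolutelyContinuous hμ)
      (hf.mono_measure (jNeg_le_variation μ)))

lemma setIntegral_fiberIntegral (hμ : μ.variation.fst ≪ m) {f : X × Z → ℝ}
    (hf : μ.Integrable f) {s : Set X} (hs : MeasurableSet s) :
    ∫ x in s, fiberIntegral m μ f x ∂m = ∫ᵛ p in Prod.fst ⁻¹' s, f p ∂<•μ := by
  have hpos := fst_jPos_absolutelyContinuous hμ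
  have hneg := fst_jNeg_absolutelyContinuous hμ
  have hfpos := hf.mono_measure (jPos_le_variation μ)
  have hfneg := hf.mono_measure (jNeg_le_variation μ)
  have hs' : MeasurableSet (Prod.fst ⁻¹' s : Set (X × Z)) := measurable_fst hs
  calc ∫ x in s, fiberIntegral m μ f x ∂m
      = ∫ p in Prod.fst ⁻¹' s, f p ∂jPos μ - ∫ p in Prod.fst ⁻¹' s, f p ∂jNeg μ := by
        rw [← setIntegral_integral_fiberMeasure hpos hfpos hs,
          ← setIntegral_integral_fiberMeasure hneg hfneg hs]
        exact integral_sub (integrable_integral_fiberMeasure hpos hfpos).integrableOn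
          (integrable_integral_fiberMeasure hneg hfneg).integrableOn
    _ = ∫ᵛ p in Prod.fst ⁻¹' s, f p ∂<•μ := by
        rw [← integral_indicator hs', ← integral_indicator hs',
          integral_jPos_sub_integral_jNeg (hf.indicator hs'), VectorMeasure.integral_indicator hs']

end Fibers

section SkewProducts

variable {X Y Z W : Type*} [MeasurableSpace X] [MeasurableSpace Y] [MeasurableSpace Z]
  [MeasurableSpace W]

/-- The skew product `(x, z) ↦ (T x, G(x, z))` over a base map `T`. It extends `skew` to an
arbitrary base. -/
def skewProduct (T : X → Y) (G : X × Z → W) (p : X × Z) : Y × W :=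
  (T p.1, G p)

variable {T : X → Y} {G : X × Z → W}

lemma measurable_skewProduct (hT : Measurable T) (hG : Measurable G) :
    Measurable (skewProduct T G) :=
  (hT.comp measurable_fst).prodMk hG

variable {m : Measure X} {m' : Measure Y} {μ : SignedMeasure (X × Z)}

lemma fst_variation_map_skewProduct_absolutelyContinuous (hT : MeasurePreserving T m m')
    (hG : Measurable G) (hμ : μ.variation.fst ≪ m) :
    (μ.map (skewProduct T G)).variation.fst ≪ m' := by
  have hfst : (μ.variation.map (skewProduct T G)).fst = μ.variation.fst.map T := by
    rw [Measure.fst, Measure.fst,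
      Measure.map_map measurable_fst (measurable_skewProduct hT.measurable hG),
      Measure.map_map hT.measurable measurable_fst]
    rfl
  refine (Measure.fst_mono VectorMeasure.variation_map_le).absolutelyContinuous.trans ?_
  rw [hfst, ← hT.map_eq]
  exact hμ.map hT.measurable

variable [StandardBorelSpace Z] [Nonempty Z] [StandardBorelSpace W] [Nonempty W]

lemma eLpNormEssSup_fiberIntegral_map_le [SigmaFinite m'] (hT : MeasurePreserving T m m')
    (hG : Measurable G) (hμ : μ.variation.fst ≪ m) {f : Y × W → ℝ} (hf : Measurable f)
    (hfF : μ.Integrable (f ∘ skewProduct T G)) :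
    eLpNormEssSup (fiberIntegral m' (μ.map (skewProduct T G)) f) m' ≤
      eLpNormEssSup (fiberIntegral m μ (f ∘ skewProduct T G)) m := by
  have := hT.sigmaFinite
  have hF := measurable_skewProduct hT.measurable hG
  have hμ' := fst_variation_map_skewProduct_absolutelyContinuous hT hG hμ
  have hf' : (μ.map (skewProduct T G)).Integrable f := hfF.map hf.aestronglyMeasurable
  refine eLpNormEssSup_le_of_setIntegral_eq hT (integrable_fiberIntegral hμ' hf') fun s hs => ?_
  calc ∫ y in s, fiberIntegral m' (μ.map (skewProduct T G)) f y ∂m'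
      = ∫ᵛ q in Prod.fst ⁻¹' s, f q ∂<•(μ.map (skewProduct T G)) :=
        setIntegral_fiberIntegral hμ' hf' hs
    _ = ∫ᵛ p in Prod.fst ⁻¹' (T ⁻¹' s), (f ∘ skewProduct T G) p ∂<•μ :=
        VectorMeasure.setIntegral_map hF (measurable_fst hs) hf.aestronglyMeasurable hfF
    _ = ∫ x in T ⁻¹' s, fiberIntegral m μ (f ∘ skewProduct T G) x ∂m :=
        (setIntegral_fiberIntegral hμ hfF (hT.measurable hs)).symm

end SkewProducts

section BoundedLipschitz

/-- The class of `1`-Lipschitz functions bounded by `1`, over which the supremum defining `wDist`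
is taken. -/
def testFunctions (Z : Type*) [MetricSpace Z] : Set (Z → ℝ) :=
  {g | LipschitzWith 1 g ∧ ∀ z, |g z| ≤ 1}

variable {Z : Type*} [MetricSpace Z]

lemma exists_countable_testFunctions_tendsto [TopologicalSpace.SeparableSpace Z] [Nonempty Z] :
    ∃ D ⊆ testFunctions Z, D.Countable ∧ ∀ g ∈ testFunctions Z,
      ∃ u : ℕ → Z → ℝ, (∀ n, u n ∈ D) ∧ ∀ z, Tendsto (u · z) atTop (𝓝 (g z)) := by
  -- By equicontinuity, convergence of test functions on a dense sequence is pointwise convergence.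
  let restrictDense : testFunctions Z → ℕ → ℝ := fun g n => g.1 (TopologicalSpace.denseSeq Z n)
  let _ : TopologicalSpace (testFunctions Z) := .induced restrictDense inferInstance
  have : SecondCountableTopology (testFunctions Z) :=
    TopologicalSpace.secondCountableTopology_induced _ _ _
  obtain ⟨D, hD, hDdense⟩ := TopologicalSpace.exists_countable_dense (testFunctions Z)
  refine ⟨(↑) '' D, Subtype.coe_image_subset _ _, hD.image _, fun g hg => ?_⟩
  obtain ⟨u, huD, hu⟩ := mem_closure_iff_seq_limit.1 (hDdense ⟨g, hg⟩)
  have hudense : Tendsto (restrictDense ∘ u) atTop (𝓝 (restrictDense ⟨g, hg⟩)) :=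
    (continuous_induced_dom.tendsto _).comp hu
  have huequi : UniformEquicontinuous fun n => (u n).1 :=
    LipschitzWith.uniformEquicontinuous _ 1 fun n => (u n).2.1
  refine ⟨fun n => u n, fun n => mem_image_of_mem _ (huD n), fun z => ?_⟩
  refine (huequi.equicontinuous z).tendsto_of_mem_closure
    (hg.1.continuous.continuousAt.mono_left inf_le_left) ?_
    (TopologicalSpace.denseRange_denseSeq Z z)
  rintro _ ⟨n, rfl⟩
  exact tendsto_pi_nhds.1 hudense n

lemma exists_testFunction_eq_mul_add {α : ℝ≥0} {h : Z → ℝ} (hh : LipschitzWith α h)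
    (hZ : ∀ z w : Z, dist z w ≤ 1) (z₀ : Z) :
    ∃ k ∈ testFunctions Z, ∀ z, h z = α * k z + h z₀ := by
  have hdist : ∀ z w, |h z - h w| ≤ dist z w * α := fun z w => by
    simpa only [Real.dist_eq, mul_comm] using hh.dist_le_mul z w
  have hquot : ∀ z w, |(h z - h w) / α| ≤ dist z w := fun z w => by
    rw [abs_div, NNReal.abs_eq]
    exact div_le_of_le_mul₀ α.2 dist_nonneg (hdist z w)
  have hzero : (α : ℝ) = 0 → ∀ z, h z - h z₀ = 0 := fun hα z => by
    simpa only [hα, mul_zero, abs_nonpos_iff] using hdist z z₀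
  -- If `α = 0`, then `h` is constant and the quotient is the junk value `0`.
  refine ⟨fun z => (h z - h z₀) / α, ⟨LipschitzWith.of_dist_le_mul fun z w => ?_, fun z => ?_⟩,
    fun z => ?_⟩
  · rw [Real.dist_eq, div_sub_div_same, sub_sub_sub_cancel_right, NNReal.coe_one, one_mul]
    exact hquot z w
  · exact (hquot z z₀).trans (hZ z z₀)
  · rw [mul_div_cancel_of_imp' fun hα => hzero hα z, sub_add_cancel]

variable [MeasurableSpace Z] {ν₁ ν₂ : Measure Z}

lemma enorm_integral_sub_le_wDist {g : Z → ℝ} (hg : g ∈ testFunctions Z) :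
    ‖∫ z, g z ∂ν₁ - ∫ z, g z ∂ν₂‖ₑ ≤ wDist ν₁ ν₂ := by
  rw [Real.enorm_eq_ofReal_abs]
  exact le_iSup (fun g : testFunctions Z =>
    ENNReal.ofReal |∫ z, g.1 z ∂ν₁ - ∫ z, g.1 z ∂ν₂|) ⟨g, hg⟩

variable [OpensMeasurableSpace Z]

lemma tendsto_integral_of_testFunctions {ν : Measure Z} [IsFiniteMeasure ν] {u : ℕ → Z → ℝ}
    {g : Z → ℝ} (hu : ∀ n, u n ∈ testFunctions Z)
    (hug : ∀ z, Tendsto (u · z) atTop (𝓝 (g z))) :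
    Tendsto (fun n => ∫ z, u n z ∂ν) atTop (𝓝 (∫ z, g z ∂ν)) :=
  tendsto_integral_of_dominated_convergence 1 (fun n => (hu n).1.continuous.aestronglyMeasurable)
    (integrable_const 1) (fun n => ae_of_all _ (hu n).2) (ae_of_all _ hug)

lemma exists_countable_testFunctions_wDist_le [TopologicalSpace.SeparableSpace Z] [Nonempty Z] :
    ∃ D ⊆ testFunctions Z, D.Countable ∧
      ∀ (ν₁ ν₂ : Measure Z) [IsFiniteMeasure ν₁] [IsFiniteMeasure ν₂] (c : ℝ≥0∞),
        (∀ g ∈ D, ‖∫ z, g z ∂ν₁ - ∫ z, g z ∂ν₂‖ₑ ≤ c) → wDist ν₁ ν₂ ≤ c := by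
  obtain ⟨D, hDtest, hD, hDdense⟩ := exists_countable_testFunctions_tendsto (Z := Z)
  refine ⟨D, hDtest, hD, fun ν₁ ν₂ _ _ c hc => iSup_le fun ⟨g, hg⟩ => ?_⟩
  obtain ⟨u, huD, hug⟩ := hDdense g hg
  have hu : ∀ n, u n ∈ testFunctions Z := fun n => hDtest (huD n)
  rw [← Real.enorm_eq_ofReal_abs]
  have hlim₁ := tendsto_integral_of_testFunctions (ν := ν₁) hu hug
  have hlim₂ := tendsto_integral_of_testFunctions (ν := ν₂) hu hug
  exact le_of_tendsto (hlim₁.sub hlim₂).enorm (Eventually.of_forall fun n => hc _ (huD n))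

lemma enorm_integral_sub_le_mul_wDist_add [Nonempty Z] [IsFiniteMeasure ν₁] [IsFiniteMeasure ν₂]
    (hZ : ∀ z w : Z, dist z w ≤ 1) {α : ℝ≥0} {h : Z → ℝ} (hh : LipschitzWith α h)
    (hh1 : ∀ z, |h z| ≤ 1) :
    ‖∫ z, h z ∂ν₁ - ∫ z, h z ∂ν₂‖ₑ ≤ α * wDist ν₁ ν₂ + ‖ν₁.real univ - ν₂.real univ‖ₑ := by
  obtain ⟨z₀⟩ := ‹Nonempty Z›
  obtain ⟨k, hk, hhk⟩ := exists_testFunction_eq_mul_add hh hZ z₀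
  have hint : ∀ (ν : Measure Z) [IsFiniteMeasure ν],
      ∫ z, h z ∂ν = α * ∫ z, k z ∂ν + h z₀ * ν.real univ := fun ν _ => by
    have hkν : Integrable k ν := .of_bound hk.1.continuous.aestronglyMeasurable 1 (ae_of_all _ hk.2)
    rw [integral_congr_ae (ae_of_all _ hhk),
      integral_add (hkν.const_mul _) (integrable_const _), integral_const_mul, integral_const,
      smul_eq_mul, mul_comm (ν.real univ)]
  calc ‖∫ z, h z ∂ν₁ - ∫ z, h z ∂ν₂‖ₑ
      = ‖α * (∫ z, k z ∂ν₁ - ∫ z, k z ∂ν₂) + h z₀ * (ν₁.real univ - ν₂.real univ)‖ₑ := by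
        rw [hint ν₁, hint ν₂]
        ring_nf
    _ ≤ ‖(α : ℝ)‖ₑ * ‖∫ z, k z ∂ν₁ - ∫ z, k z ∂ν₂‖ₑ
          + ‖h z₀‖ₑ * ‖ν₁.real univ - ν₂.real univ‖ₑ := by
        rw [← enorm_mul, ← enorm_mul]
        exact enorm_add_le _ _
    _ ≤ α * wDist ν₁ ν₂ + 1 * ‖ν₁.real univ - ν₂.real univ‖ₑ := by
        have hz₀ : ‖h z₀‖ₑ ≤ 1 := by
          rw [Real.enorm_eq_ofReal_abs, ← ENNReal.ofReal_one]
          exact ENNReal.ofReal_le_ofReal (hh1 z₀)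
        rw [NNReal.enorm_eq]
        gcongr
        exact enorm_integral_sub_le_wDist hk
    _ = α * wDist ν₁ ν₂ + ‖ν₁.real univ - ν₂.real univ‖ₑ := by rw [one_mul]

end BoundedLipschitz

section LasotaYorke

variable {X Y Z W : Type*} [MeasurableSpace X] [MeasurableSpace Y]
  [MetricSpace Z] [MeasurableSpace Z] [OpensMeasurableSpace Z] [StandardBorelSpace Z] [Nonempty Z]
  [MetricSpace W] [MeasurableSpace W] [OpensMeasurableSpace W] [StandardBorelSpace W] [Nonempty W]

/-- The norm `‖μ‖_∞ = ess sup_x ‖μ|_x‖_W` of a signed measure on `X × Z`, relative to a reference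
measure `m` on the base. It extends `infNorm` to an arbitrary base. -/
noncomputable def fiberNorm (m : Measure X) (μ : SignedMeasure (X × Z)) : ℝ≥0∞ :=
  essSup (fun x => wDist (fiberMeasure m (jPos μ) x) (fiberMeasure m (jNeg μ) x)) m

/-- The density `φ₁ = d(π₁_*μ)/dm` of the first marginal of a signed measure on `X × Z`, computed
from its Jordan parts. It extends `phiPair` to an arbitrary base. -/
noncomputable def marginalDensity (m : Measure X) (μ : SignedMeasure (X × Z)) (x : X) : ℝ :=
  ((jPos μ).fst.rnDeriv m x).toReal - ((jNeg μ).fst.rnDeriv m x).toReal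

variable {m : Measure X} {m' : Measure Y} {μ : SignedMeasure (X × Z)}

-- A countable family of test functions suffices, so the supremum over test functions commutes
-- with the essential supremum.
lemma fiberNorm_le_of_forall_testFunctions [TopologicalSpace.SeparableSpace Z] {c : ℝ≥0∞}
    (h : ∀ g ∈ testFunctions Z, eLpNormEssSup (fiberIntegral m μ (g ∘ Prod.snd)) m ≤ c) :
    fiberNorm m μ ≤ c := by
  obtain ⟨D, hDtest, hD, hDle⟩ := exists_countable_testFunctions_wDist_le (Z := Z)
  have hfib : ∀ᵐ x ∂m, ∀ g ∈ D, ‖fiberIntegral m μ (g ∘ Prod.snd) x‖ₑ ≤ c :=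
    (ae_ball_iff hD).2 fun g hg =>
      ae_le_eLpNormEssSup.mono fun x hx => hx.trans (h g (hDtest hg))
  refine essSup_le_of_ae_le c ?_
  filter_upwards [hfib, ae_isFiniteMeasure_fiberMeasure (jPos μ),
    ae_isFiniteMeasure_fiberMeasure (jNeg μ)] with x hx _ _
  exact hDle _ _ c hx

lemma eLpNormEssSup_fiberIntegral_le (hZ : ∀ z w : Z, dist z w ≤ 1) {α : ℝ≥0} {f : X × Z → ℝ}
    (hf : ∀ x, LipschitzWith α fun z => f (x, z)) (hf1 : ∀ p, |f p| ≤ 1) :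
    eLpNormEssSup (fiberIntegral m μ f) m ≤
      α * fiberNorm m μ + eLpNormEssSup (marginalDensity m μ) m := by
  refine essSup_le_of_ae_le _ ?_
  filter_upwards [ae_isFiniteMeasure_fiberMeasure (jPos μ),
    ae_isFiniteMeasure_fiberMeasure (jNeg μ),
    ENNReal.ae_le_essSup fun x => wDist (fiberMeasure m (jPos μ) x) (fiberMeasure m (jNeg μ) x),
    ae_le_eLpNormEssSup (f := marginalDensity m μ) (μ := m)] with x _ _ hnorm hdensity
  refine (enorm_integral_sub_le_mul_wDist_add hZ (hf x) fun z => hf1 (x, z)).trans ?_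
  rw [fiberMeasure_real_univ, fiberMeasure_real_univ]
  exact add_le_add (mul_le_mul_right hnorm _) hdensity

theorem transfer_infNorm_LasotaYorke_general [TopologicalSpace.SeparableSpace W] [SigmaFinite m']
    {T : X → Y} (hT : MeasurePreserving T m m') (hZ : ∀ z w : Z, dist z w ≤ 1) {G : X × Z → W}
    (hG : Measurable G) {α : ℝ≥0} (hα : ∀ x, LipschitzWith α fun z => G (x, z))
    (hμ : μ.variation.fst ≪ m) :
    fiberNorm m' (μ.map (skewProduct T G)) ≤
      α * fiberNorm m μ + eLpNormEssSup (marginalDensity m μ) m := by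
  refine fiberNorm_le_of_forall_testFunctions fun g hg => ?_
  have hgW : Measurable (g ∘ Prod.snd : Y × W → ℝ) :=
    hg.1.continuous.measurable.comp measurable_snd
  have hgG : μ.Integrable ((g ∘ Prod.snd) ∘ skewProduct T G) :=
    .of_bound (hgW.comp (measurable_skewProduct hT.measurable hG)).aestronglyMeasurable 1
      (ae_of_all _ fun p => hg.2 (G p))
  calc eLpNormEssSup (fiberIntegral m' (μ.map (skewProduct T G)) (g ∘ Prod.snd)) m'
      ≤ eLpNormEssSup (fiberIntegral m μ ((g ∘ Prod.snd) ∘ skewProduct T G)) m :=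
        eLpNormEssSup_fiberIntegral_map_le hT hG hμ hgW hgG
    _ ≤ α * fiberNorm m μ + eLpNormEssSup (marginalDensity m μ) m :=
        eLpNormEssSup_fiberIntegral_le hZ
          (fun x => one_mul α ▸ hg.1.comp (hα x)) fun p => hg.2 (G p)

end LasotaYorke

section Subshift

variable {N : ℕ} {A : Fin N → Fin N → Bool} {K : Type*}

lemma measurable_shift : Measurable (shift : SigmaA N A → SigmaA N A) :=
  (measurable_pi_lambda (fun (x : SigmaA N A) i => x.1 (i + 1)) fun i =>
    (measurable_pi_apply (i + 1)).comp measurable_subtype_coe).subtype_mk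

lemma CondG1.lipschitzWith [MetricSpace K] {G : SigmaA N A × K → K} {α : ℝ} (hG : CondG1 G α)
    (hα : 0 ≤ α) (x : SigmaA N A) : LipschitzWith α.toNNReal fun z => G (x, z) :=
  .of_dist_le_mul fun z w => by
    simpa only [Real.coe_toNNReal α hα] using hG x z w

variable [MeasurableSpace K] {m : Measure (SigmaA N A)} {μ : SignedMeasure (SigmaA N A × K)}

lemma phiSup_eq_eLpNormEssSup : phiSup m μ = eLpNormEssSup (marginalDensity m μ) m := by
  simp only [phiSup, eLpNormEssSup, Real.enorm_eq_ofReal_abs]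
  rfl

lemma MemAB.fst_variation_absolutelyContinuous (hμ : MemAB m μ) : μ.variation.fst ≪ m := by
  rw [← jPos_add_jNeg, Measure.fst_add]
  exact hμ.1.add_left hμ.2.1

variable [MetricSpace K] [CompactSpace K] [BorelSpace K] [Nonempty K]

lemma fiberR_eq_fiberMeasure (ν : Measure (SigmaA N A × K)) [hν : IsFiniteMeasure ν] :
    fiberR m ν = fiberMeasure m ν :=
  funext fun _ => dif_pos hν

lemma infNorm_eq_fiberNorm : infNorm m μ = fiberNorm m μ := by
  simp only [infNorm, infNormPair, fiberR_eq_fiberMeasure, fiberNorm]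

end Subshift

/-- Under (G1), `‖F^*μ‖_∞ ≤ α ‖μ‖_∞ + ‖φ₁‖_∞` for every
`μ ∈ S^∞`. -/
theorem transfer_infNorm_LasotaYorke
    (N : ℕ) (A : Fin N → Fin N → Bool) (hA : Aperiodic A)
    (θ : ℝ) (hθ0 : 0 < θ) (hθ1 : θ < 1)
    (m : Measure (SigmaA N A)) [IsProbabilityMeasure m]
    (hmM : IsMarkov m) (hminv : m.map shift = m)
    {K : Type*} [MetricSpace K] [CompactSpace K] [Nonempty K]
    [MeasurableSpace K] [BorelSpace K]
    (hdiam : Metric.diam (Set.univ : Set K) = 1)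
    (G : SigmaA N A × K → K) (hGm : Measurable (skew G))
    (α : ℝ) (hα0 : 0 < α) (hα1 : α < 1) (hG1 : CondG1 G α)
    (μ : SignedMeasure (SigmaA N A × K)) (hμ : MemS m θ μ) :
    infNorm m (transfer G μ) ≤ ENNReal.ofReal α * infNorm m μ + phiSup m μ := by
  have hT : MeasurePreserving shift m m := ⟨measurable_shift, hminv⟩
  have hK : ∀ z w : K, dist z w ≤ 1 := fun z w =>
    hdiam ▸ Metric.dist_le_diam_of_mem isCompact_univ.isBounded (mem_univ z) (mem_univ w)
  rw [infNorm_eq_fiberNorm, infNorm_eq_fiberNorm, phiSup_eq_eLpNormEssSup]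
  exact transfer_infNorm_LasotaYorke_general hT hK (measurable_snd.comp hGm)
    (hG1.lipschitzWith hα0.le) (MemAB.fst_variation_absolutelyContinuous hμ.1)

end RDS
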